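/- Let k ≥ 1 and 0 < c₀ < 1, let S be a compact metric space, and suppose given: (i) a map A : S → (E → ℝ) such that each A_s is C² and satisfies -(1/c₀)·‖v‖² ≤ D²A_s(u)(v,v) ≤ -c₀·‖v‖² for all u ∈ B̄ and v ∈ E, and such that (s,u) ↦ A_s(u) is continuous on S × B̄; (ii) a continuous map m : S → B̄ with ∇A_s(m(s)) = 0 and ‖m(s)‖ ≤ c₀/√10 for every s ∈ S; (iii) a continuous map φ : S × B̄ × [0,∞) → B̄ such that φ(s,v,0) = v and, for each (s,v), the curve t ↦ φ(s,v,t) has derivative -(1 - ‖φ(s,v,t)‖²)·∇A_s(φ(s,v,t)) at every t ≥ 0. Then for every δ with 0 < δ < 1/4 there exists T ≥ 0 such that for every s ∈ S and every v ∈ B̄ with ‖v - m(s)‖ ≥ δ one has A_s(φ(s,v,T)) < A_s(0) - c₀/10 and ‖φ(s,v,T)‖ > c₀/4. -/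

import Mathlib

/-!
Along a trajectory `γ` of the descent field, uniform concavity makes `‖γ - m‖²` nondecreasing,
with growth rate at least `2c₀(1 - ‖γ‖²)‖γ - m‖²`. This rate is bounded below as long as
`‖γ‖ ≤ 9/10`, whereas `‖γ - m‖ ≤ 2` throughout, so within a time depending only on `c₀` and `δ` the
trajectory reaches norm `9/10`. From then on `‖γ - m‖ ≥ 9/10 - ‖m‖` by monotonicity, hence also
`‖γ‖ ≥ 9/10 - 2‖m‖`. The distance to `m` is large enough for the drop in `A`: Taylor's formula at
`m` gives `A(γ) ≤ A(m) - (c₀/2)‖γ - m‖²` and `A(0) ≥ A(m) - ‖m‖²/(2c₀) ≥ A(m) - c₀/20`.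
-/

section Taylor

open Set AffineMap

theorem image_le_add_mul_sub_of_deriv_le {f f' : ℝ → ℝ} {a b C : ℝ}
    (hf : ∀ x ∈ Icc a b, HasDerivWithinAt f (f' x) (Icc a b) x)
    (hC : ∀ x ∈ Icc a b, f' x ≤ C) {x : ℝ} (hx : x ∈ Icc a b) :
    f x ≤ f a + C * (x - a) := by
  have hline (y : ℝ) : HasDerivAt (fun y ↦ f a + C * (y - a)) C y := by
    simpa using (((hasDerivAt_id y).sub_const a).const_mul C).const_add (f a)
  exact image_le_of_deriv_right_le_deriv_boundary
    (fun y hy ↦ (hf y hy).continuousWithinAt)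
    (fun y hy ↦ (hf y (Ico_subset_Icc_self hy)).mono_of_mem_nhdsWithin (Icc_mem_nhdsGE_of_mem hy))
    (by simp) (fun y _ ↦ (hline y).continuousAt.continuousWithinAt)
    (fun y _ ↦ (hline y).hasDerivWithinAt) (fun y hy ↦ hC y (Ico_subset_Icc_self hy)) hx

theorem image_le_quadratic_of_second_deriv_le {f f' f'' : ℝ → ℝ} {a b C : ℝ}
    (hf : ∀ x ∈ Icc a b, HasDerivWithinAt f (f' x) (Icc a b) x)
    (hf' : ∀ x ∈ Icc a b, HasDerivWithinAt f' (f'' x) (Icc a b) x)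
    (hC : ∀ x ∈ Icc a b, f'' x ≤ C) {x : ℝ} (hx : x ∈ Icc a b) :
    f x ≤ f a + f' a * (x - a) + C / 2 * (x - a) ^ 2 := by
  have hparabola (y : ℝ) : HasDerivAt (fun y ↦ f a + f' a * (y - a) + C / 2 * (y - a) ^ 2)
      (f' a + C * (y - a)) y := by
    have hsub := (hasDerivAt_id y).sub_const a
    exact (((hsub.const_mul (f' a)).const_add (f a)).add
      ((hsub.pow 2).const_mul (C / 2))).congr_deriv (by simp; ring)
  exact image_le_of_deriv_right_le_deriv_boundary
    (fun y hy ↦ (hf y hy).continuousWithinAt)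
    (fun y hy ↦ (hf y (Ico_subset_Icc_self hy)).mono_of_mem_nhdsWithin (Icc_mem_nhdsGE_of_mem hy))
    (by simp) (fun y _ ↦ (hparabola y).continuousAt.continuousWithinAt)
    (fun y _ ↦ (hparabola y).hasDerivWithinAt)
    (fun y hy ↦ image_le_add_mul_sub_of_deriv_le hf' hC (Ico_subset_Icc_self hy)) hx

variable {E F : Type*} [NormedAddCommGroup E] [NormedSpace ℝ E]
  [NormedAddCommGroup F] [NormedSpace ℝ F]

theorem hasDerivAt_comp_lineMap {f : E → F} {x y : E} {r : ℝ}
    (hf : DifferentiableAt ℝ f (lineMap x y r)) :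
    HasDerivAt (fun r : ℝ ↦ f (lineMap x y r)) (fderiv ℝ f (lineMap x y r) (y - x)) r :=
  hf.hasFDerivAt.comp_hasDerivAt r hasDerivAt_lineMap

theorem hasDerivAt_fderiv_comp_lineMap {f : E → ℝ} {x y : E} {r : ℝ}
    (hf : ContDiffAt ℝ 2 f (lineMap x y r)) :
    HasDerivAt (fun r : ℝ ↦ fderiv ℝ f (lineMap x y r) (y - x))
      (iteratedFDeriv ℝ 2 f (lineMap x y r) ![y - x, y - x]) r := by
  have hfderiv : DifferentiableAt ℝ (fderiv ℝ f) (lineMap x y r) :=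
    (hf.fderiv_right (m := 1) (by norm_num)).differentiableAt one_ne_zero
  simpa [iteratedFDeriv_two_apply] using
    (hasDerivAt_comp_lineMap hfderiv).clm_apply (hasDerivAt_const r (y - x))

variable {f : E → ℝ} {x y : E} {C : ℝ}

theorem fderiv_apply_sub_le_of_hessian_le
    (hf : ∀ z ∈ segment ℝ x y, ContDiffAt ℝ 2 f z)
    (hC : ∀ z ∈ segment ℝ x y, iteratedFDeriv ℝ 2 f z ![y - x, y - x] ≤ C) :
    fderiv ℝ f y (y - x) ≤ fderiv ℝ f x (y - x) + C := by
  simpa using image_le_add_mul_sub_of_deriv_le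
    (fun r hr ↦ (hasDerivAt_fderiv_comp_lineMap
      (hf _ (lineMap_mem_segment ℝ x y hr))).hasDerivWithinAt)
    (fun r hr ↦ hC _ (lineMap_mem_segment ℝ x y hr)) (right_mem_Icc.2 zero_le_one)

theorem image_le_taylor_of_hessian_le
    (hf : ∀ z ∈ segment ℝ x y, ContDiffAt ℝ 2 f z)
    (hC : ∀ z ∈ segment ℝ x y, iteratedFDeriv ℝ 2 f z ![y - x, y - x] ≤ C) :
    f y ≤ f x + fderiv ℝ f x (y - x) + C / 2 := by
  simpa using image_le_quadratic_of_second_deriv_le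
    (fun r hr ↦ (hasDerivAt_comp_lineMap ((hf _ (lineMap_mem_segment ℝ x y hr)).differentiableAt
      two_ne_zero)).hasDerivWithinAt)
    (fun r hr ↦ (hasDerivAt_fderiv_comp_lineMap
      (hf _ (lineMap_mem_segment ℝ x y hr))).hasDerivWithinAt)
    (fun r hr ↦ hC _ (lineMap_mem_segment ℝ x y hr)) (right_mem_Icc.2 zero_le_one)

theorem taylor_le_image_of_le_hessian
    (hf : ∀ z ∈ segment ℝ x y, ContDiffAt ℝ 2 f z)
    (hC : ∀ z ∈ segment ℝ x y, C ≤ iteratedFDeriv ℝ 2 f z ![y - x, y - x]) :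
    f x + fderiv ℝ f x (y - x) + C / 2 ≤ f y := by
  have hneg := image_le_taylor_of_hessian_le (f := -f) (C := -C) (fun z hz ↦ (hf z hz).neg)
    (fun z hz ↦ by simpa [iteratedFDeriv_neg] using hC z hz)
  simp only [Pi.neg_apply, fderiv_neg, neg_apply] at hneg
  linarith

end Taylor

section Descent

open Set Metric
open scoped Gradient InnerProductSpace

variable {E : Type*} [NormedAddCommGroup E] [InnerProductSpace ℝ E] [CompleteSpace E]

/-- A trajectory in the closed unit ball of the field `u ↦ -(1 - ‖u‖²) ∇A(u)`, the descent of `A`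
slowed down near the unit sphere. Only forward time matters, so the derivative at `0` is
one-sided. -/
structure IsDampedDescent (A : E → ℝ) (γ : ℝ → E) : Prop where
  mem_closedBall : ∀ t, 0 ≤ t → γ t ∈ closedBall (0 : E) 1
  hasDerivWithinAt : ∀ t, 0 ≤ t →
    HasDerivWithinAt γ (-(1 - ‖γ t‖ ^ 2) • ∇ A (γ t)) (Ici 0) t

namespace IsDampedDescent

variable {A : E → ℝ} {γ : ℝ → E} {m : E} {c : ℝ}

theorem norm_le_one (hγ : IsDampedDescent A γ) {t : ℝ} (ht : 0 ≤ t) : ‖γ t‖ ≤ 1 := by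
  simpa using hγ.mem_closedBall t ht

theorem hasDerivWithinAt_norm_sub_sq (hγ : IsDampedDescent A γ) (m : E) {t : ℝ} (ht : 0 ≤ t) :
    HasDerivWithinAt (fun t ↦ ‖γ t - m‖ ^ 2)
      (-2 * (1 - ‖γ t‖ ^ 2) * ⟪∇ A (γ t), γ t - m⟫_ℝ) (Ici 0) t := by
  refine ((hγ.hasDerivWithinAt t ht).sub_const m).norm_sq.congr_deriv ?_
  rw [inner_smul_right, real_inner_comm]
  ring

theorem monotoneOn_norm_sub (hγ : IsDampedDescent A γ)
    (hrad : ∀ u ∈ closedBall (0 : E) 1, ⟪∇ A u, u - m⟫_ℝ ≤ 0) :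
    MonotoneOn (fun t ↦ ‖γ t - m‖) (Ici 0) := by
  have hsq : MonotoneOn (fun t ↦ ‖γ t - m‖ ^ 2) (Ici 0) := by
    refine monotoneOn_of_hasDerivWithinAt_nonneg (convex_Ici 0)
      (fun t ht ↦ (hγ.hasDerivWithinAt_norm_sub_sq m ht).continuousWithinAt)
      (fun t ht ↦ (hγ.hasDerivWithinAt_norm_sub_sq m (interior_subset ht)).mono interior_subset)
      fun t ht ↦ ?_
    have ht : 0 ≤ t := interior_subset ht
    have hdamp : 0 ≤ 1 - ‖γ t‖ ^ 2 :=
      sub_nonneg.2 (pow_le_one₀ (norm_nonneg _) (hγ.norm_le_one ht))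
    have := mul_nonneg hdamp (neg_nonneg.2 (hrad _ (hγ.mem_closedBall t ht)))
    linarith
  exact fun s hs t ht hst ↦ le_of_sq_le_sq (hsq hs ht hst) (norm_nonneg _)

theorem norm_sub_sq_add_le_norm_sub_sq (hγ : IsDampedDescent A γ) (hc : 0 ≤ c)
    (hrad : ∀ u ∈ closedBall (0 : E) 1, ⟪∇ A u, u - m⟫_ℝ ≤ -c * ‖u - m‖ ^ 2)
    {r T : ℝ} (hr : r ≤ 1) (hT : 0 ≤ T) (hγr : ∀ t ∈ Icc 0 T, ‖γ t‖ ≤ r) :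
    ‖γ 0 - m‖ ^ 2 + 2 * c * (1 - r ^ 2) * ‖γ 0 - m‖ ^ 2 * T ≤ ‖γ T - m‖ ^ 2 := by
  have hmono := hγ.monotoneOn_norm_sub (m := m) fun u hu ↦
    (hrad u hu).trans (by simpa using mul_nonneg hc (sq_nonneg ‖u - m‖))
  have hr0 : 0 ≤ r := (norm_nonneg _).trans (hγr 0 (left_mem_Icc.2 hT))
  have hneg := image_le_add_mul_sub_of_deriv_le (C := -(2 * c * (1 - r ^ 2) * ‖γ 0 - m‖ ^ 2))
    (fun t ht ↦ ((hγ.hasDerivWithinAt_norm_sub_sq m ht.1).mono Icc_subset_Ici_self).neg)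
    (fun t ht ↦ ?_) (right_mem_Icc.2 hT)
  · simp only [Pi.neg_apply, sub_zero] at hneg
    linarith
  · have hdamp : 1 - r ^ 2 ≤ 1 - ‖γ t‖ ^ 2 := by gcongr; exact hγr t ht
    have hr_sq : 0 ≤ 1 - r ^ 2 := sub_nonneg.2 (pow_le_one₀ hr0 hr)
    have hdist : ‖γ 0 - m‖ ^ 2 ≤ ‖γ t - m‖ ^ 2 := by
      gcongr; exact hmono self_mem_Ici ht.1 ht.1
    have hslope : c * ‖γ 0 - m‖ ^ 2 ≤ -⟪∇ A (γ t), γ t - m⟫_ℝ := by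
      linarith [hrad _ (hγ.mem_closedBall t ht.1), mul_le_mul_of_nonneg_left hdist hc]
    have := mul_le_mul hdamp hslope (by positivity) (hr_sq.trans hdamp)
    linarith

theorem exists_le_norm (hγ : IsDampedDescent A γ) (hc : 0 < c)
    (hrad : ∀ u ∈ closedBall (0 : E) 1, ⟪∇ A u, u - m⟫_ℝ ≤ -c * ‖u - m‖ ^ 2)
    (hm : ‖m‖ ≤ 1) {δ r : ℝ} (hδ : 0 < δ) (hγ0 : δ ≤ ‖γ 0 - m‖) (hr0 : 0 ≤ r) (hr : r < 1) :
    ∃ t ∈ Icc 0 (2 / (c * (1 - r ^ 2) * δ ^ 2)), r ≤ ‖γ t‖ := by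
  by_contra! hγr
  have hr_sq : 0 < 1 - r ^ 2 := sub_pos.2 (pow_lt_one₀ hr0 hr two_ne_zero)
  set T := 2 / (c * (1 - r ^ 2) * δ ^ 2) with hT_def
  have hT : 0 ≤ T := by positivity
  have hgrowth := hγ.norm_sub_sq_add_le_norm_sub_sq hc.le hrad hr.le hT fun t ht ↦ (hγr t ht).le
  have hgain : 4 ≤ 2 * c * (1 - r ^ 2) * ‖γ 0 - m‖ ^ 2 * T := calc
    4 = 2 * c * (1 - r ^ 2) * δ ^ 2 * T := by rw [hT_def]; field_simp; norm_num
    _ ≤ 2 * c * (1 - r ^ 2) * ‖γ 0 - m‖ ^ 2 * T := by gcongr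
  have hdist : ‖γ T - m‖ ^ 2 ≤ 2 ^ 2 := by
    gcongr
    linarith [norm_sub_le (γ T) m, hγ.norm_le_one hT]
  have hstart : 0 < ‖γ 0 - m‖ ^ 2 := pow_pos (hδ.trans_le hγ0) 2
  linarith

theorem sub_norm_le_norm_sub (hγ : IsDampedDescent A γ) (hc : 0 < c)
    (hrad : ∀ u ∈ closedBall (0 : E) 1, ⟪∇ A u, u - m⟫_ℝ ≤ -c * ‖u - m‖ ^ 2)
    (hm : ‖m‖ ≤ 1) {δ r T : ℝ} (hδ : 0 < δ) (hγ0 : δ ≤ ‖γ 0 - m‖) (hr0 : 0 ≤ r) (hr : r < 1)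
    (hT : 2 / (c * (1 - r ^ 2) * δ ^ 2) ≤ T) :
    r - ‖m‖ ≤ ‖γ T - m‖ := by
  obtain ⟨t, ht, hrt⟩ := hγ.exists_le_norm hc hrad hm hδ hγ0 hr0 hr
  have hmono := hγ.monotoneOn_norm_sub (m := m) fun u hu ↦
    (hrad u hu).trans (by simpa using mul_nonneg hc.le (sq_nonneg ‖u - m‖))
  have htT : t ≤ T := ht.2.trans hT
  calc r - ‖m‖ ≤ ‖γ t‖ - ‖m‖ := by gcongr
    _ ≤ ‖γ t - m‖ := norm_sub_norm_le _ _
    _ ≤ ‖γ T - m‖ := hmono ht.1 (ht.1.trans htT) htT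

end IsDampedDescent

theorem inner_gradient_sub_le_of_hessian_le {A : E → ℝ} {K : Set E} (hK : Convex ℝ K) {m u : E}
    {c : ℝ} (hA : ∀ x ∈ K, ContDiffAt ℝ 2 A x)
    (hHess : ∀ x ∈ K, ∀ v, iteratedFDeriv ℝ 2 A x ![v, v] ≤ c * ‖v‖ ^ 2)
    (hm : m ∈ K) (hcrit : ∇ A m = 0) (hu : u ∈ K) :
    ⟪∇ A u, u - m⟫_ℝ ≤ c * ‖u - m‖ ^ 2 := by
  have hseg := hK.segment_subset hm hu
  have hmono := fderiv_apply_sub_le_of_hessian_le (fun z hz ↦ hA z (hseg hz))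
    (fun z hz ↦ hHess z (hseg hz) (u - m))
  rwa [← inner_gradient_left, ← inner_gradient_left, hcrit, inner_zero_left, zero_add] at hmono

theorem image_add_le_image_add_of_hessian_pinched {A : E → ℝ} {K : Set E} (hK : Convex ℝ K)
    {m u w : E} {c C : ℝ} (hA : ∀ x ∈ K, ContDiffAt ℝ 2 A x)
    (hHess : ∀ x ∈ K, ∀ v, c * ‖v‖ ^ 2 ≤ iteratedFDeriv ℝ 2 A x ![v, v] ∧
      iteratedFDeriv ℝ 2 A x ![v, v] ≤ C * ‖v‖ ^ 2)
    (hm : m ∈ K) (hcrit : ∇ A m = 0) (hu : u ∈ K) (hw : w ∈ K) :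
    A u + c * ‖w - m‖ ^ 2 / 2 ≤ A w + C * ‖u - m‖ ^ 2 / 2 := by
  have hfderiv (v : E) : fderiv ℝ A m v = 0 := by
    rw [← inner_gradient_left, hcrit, inner_zero_left]
  have hmu := hK.segment_subset hm hu
  have hmw := hK.segment_subset hm hw
  have hupper := image_le_taylor_of_hessian_le (fun z hz ↦ hA z (hmu hz))
    (fun z hz ↦ (hHess z (hmu hz) (u - m)).2)
  have hlower := taylor_le_image_of_le_hessian (fun z hz ↦ hA z (hmw hz))
    (fun z hz ↦ (hHess z (hmw hz) (w - m)).1)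
  rw [hfderiv] at hupper hlower
  linarith

theorem stmt_7_general {A : E → ℝ} {m : E} {γ : ℝ → E} {c₀ δ T : ℝ}
    (hc₀ : 0 < c₀) (hc₀' : c₀ ≤ 1) (hA : ∀ u ∈ closedBall (0 : E) 1, ContDiffAt ℝ 2 A u)
    (hHess : ∀ u ∈ closedBall (0 : E) 1, ∀ v : E,
      -(1 / c₀) * ‖v‖ ^ 2 ≤ iteratedFDeriv ℝ 2 A u ![v, v] ∧
      iteratedFDeriv ℝ 2 A u ![v, v] ≤ -c₀ * ‖v‖ ^ 2)
    (hmcrit : ∇ A m = 0) (hmsmall : ‖m‖ ≤ c₀ / √10) (hγ : IsDampedDescent A γ)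
    (hδ : 0 < δ) (hγ0 : δ ≤ ‖γ 0 - m‖) (hT : 11 / (c₀ * δ ^ 2) ≤ T) :
    A (γ T) < A 0 - c₀ / 10 ∧ c₀ / 4 < ‖γ T‖ := by
  have hmsq : ‖m‖ ^ 2 ≤ c₀ ^ 2 / 10 := by
    simpa [div_pow] using pow_le_pow_left₀ (norm_nonneg m) hmsmall 2
  have hm_lt : ‖m‖ ≤ 0.317 * c₀ := abs_le_of_sq_le_sq' (by nlinarith) (by positivity) |>.2
  have hm : m ∈ closedBall (0 : E) 1 := by rw [mem_closedBall_zero_iff]; linarith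
  have hball : Convex ℝ (closedBall (0 : E) 1) := convex_closedBall 0 1
  have hT0 : 0 ≤ T := le_trans (by positivity) hT
  -- The radius `r = 9/10` satisfies `r - 1/√10 > √(3/10)`, `r - 2/√10 > 1/4` and `2/(1 - r²) < 11`.
  have hreach : 2 / (c₀ * (1 - 0.9 ^ 2) * δ ^ 2) ≤ T := calc
    2 / (c₀ * (1 - 0.9 ^ 2) * δ ^ 2) = 2 / (1 - 0.9 ^ 2) / (c₀ * δ ^ 2) := by ring
    _ ≤ 11 / (c₀ * δ ^ 2) := by gcongr; norm_num
    _ ≤ T := hT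
  have hfar : 0.9 - ‖m‖ ≤ ‖γ T - m‖ := hγ.sub_norm_le_norm_sub hc₀
    (fun u hu ↦ inner_gradient_sub_le_of_hessian_le hball hA (fun x hx v ↦ (hHess x hx v).2)
      hm hmcrit hu)
    (by simpa using hm) hδ hγ0 (by norm_num) (by norm_num) hreach
  constructor
  · have hdrop : A (γ T) + -(1 / c₀) * ‖0 - m‖ ^ 2 / 2 ≤ A 0 + -c₀ * ‖γ T - m‖ ^ 2 / 2 :=
      image_add_le_image_add_of_hessian_pinched hball hA hHess hm hmcrit
        (hγ.mem_closedBall T hT0) (by simp)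
    have hcenter : 1 / c₀ * ‖0 - m‖ ^ 2 ≤ c₀ / 10 := by
      rw [zero_sub, norm_neg, one_div, inv_mul_le_iff₀ hc₀]
      linarith
    have hfar_sq : 0.3 < ‖γ T - m‖ ^ 2 := by nlinarith
    linarith [mul_lt_mul_of_pos_left hfar_sq hc₀]
  · linarith [norm_sub_le (γ T) m]

end Descent

/-- Lemma 4.5 of the paper (uniform deformation-time lemma), abstracted: given a
compact family `s ↦ A_s` of `C²` functions on Euclidean space with two-sided Hessian
bounds on the closed unit ball, continuous maximum points `m(s)` with `‖m(s)‖ ≤ c₀/√10`,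
and a continuous flow `φ` of the vector fields `u ↦ -(1-‖u‖²)·∇A_s(u)`, for every
`0 < δ < 1/4` there is a uniform time `T ≥ 0` after which every point at distance at
least `δ` from `m(s)` has been moved to where `A_s < A_s(0) - c₀/10` and `‖·‖ > c₀/4`. -/
theorem stmt_7 (k : ℕ) (hk : 1 ≤ k) (c₀ : ℝ) (hc₀ : 0 < c₀) (hc₀' : c₀ < 1)
    (S : Type*) [MetricSpace S] [CompactSpace S]
    (A : S → EuclideanSpace ℝ (Fin k) → ℝ)
    (hA : ∀ s : S, ContDiff ℝ 2 (A s))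
    (hHess : ∀ s : S, ∀ u ∈ Metric.closedBall (0 : EuclideanSpace ℝ (Fin k)) 1,
      ∀ v : EuclideanSpace ℝ (Fin k),
        -(1 / c₀) * ‖v‖ ^ 2 ≤ iteratedFDeriv ℝ 2 (A s) u ![v, v] ∧
        iteratedFDeriv ℝ 2 (A s) u ![v, v] ≤ -c₀ * ‖v‖ ^ 2)
    (hAcont : ContinuousOn (fun p : S × EuclideanSpace ℝ (Fin k) => A p.1 p.2)
      ((Set.univ : Set S) ×ˢ Metric.closedBall 0 1))
    (m : S → EuclideanSpace ℝ (Fin k)) (hmcont : Continuous m)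
    (hmball : ∀ s : S, m s ∈ Metric.closedBall (0 : EuclideanSpace ℝ (Fin k)) 1)
    (hmcrit : ∀ s : S, gradient (A s) (m s) = 0)
    (hmsmall : ∀ s : S, ‖m s‖ ≤ c₀ / Real.sqrt 10)
    (φ : S → EuclideanSpace ℝ (Fin k) → ℝ → EuclideanSpace ℝ (Fin k))
    (hφcont : ContinuousOn (fun p : S × EuclideanSpace ℝ (Fin k) × ℝ => φ p.1 p.2.1 p.2.2)
      ((Set.univ : Set S) ×ˢ Metric.closedBall 0 1 ×ˢ Set.Ici (0 : ℝ)))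
    (hφ0 : ∀ s : S, ∀ v ∈ Metric.closedBall (0 : EuclideanSpace ℝ (Fin k)) 1, φ s v 0 = v)
    (hφball : ∀ s : S, ∀ v ∈ Metric.closedBall (0 : EuclideanSpace ℝ (Fin k)) 1,
      ∀ t : ℝ, 0 ≤ t → φ s v t ∈ Metric.closedBall (0 : EuclideanSpace ℝ (Fin k)) 1)
    (hφderiv : ∀ s : S, ∀ v ∈ Metric.closedBall (0 : EuclideanSpace ℝ (Fin k)) 1,
      ∀ t : ℝ, 0 ≤ t →
        HasDerivAt (φ s v) (-(1 - ‖φ s v t‖ ^ 2) • gradient (A s) (φ s v t)) t) :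
    ∀ δ : ℝ, 0 < δ → δ < 1 / 4 →
      ∃ T : ℝ, 0 ≤ T ∧
        ∀ s : S, ∀ v ∈ Metric.closedBall (0 : EuclideanSpace ℝ (Fin k)) 1,
          δ ≤ ‖v - m s‖ →
            A s (φ s v T) < A s 0 - c₀ / 10 ∧ c₀ / 4 < ‖φ s v T‖ := by
  intro δ hδ _
  refine ⟨11 / (c₀ * δ ^ 2), by positivity, fun s v hv hvm ↦ ?_⟩
  exact stmt_7_general hc₀ hc₀'.le (fun u _ ↦ (hA s).contDiffAt) (hHess s) (hmcrit s) (hmsmall s)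
    ⟨hφball s v hv, fun t ht ↦ (hφderiv s v hv t ht).hasDerivWithinAt⟩ hδ
    (by rwa [hφ0 s v hv]) le_rfl
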